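/- Let R > 1/4, ε ∈ (0,1/2), and let ν, κ ∈ (0,1) satisfy max(ν,κ)/min(ν,κ) ≤ 4√R − 1 − ε; set μ := min(ν,κ)·(1 − 1/(4√R) − (1/(4√R))·max(ν,κ)/min(ν,κ)). Then there exist positive constants c₁, c₂, C depending only on R and ε (independent of ν, κ, k, η) such that the following holds. For all k ≠ 0 and η ∈ ℝ, set p(t) := k² + (η − kt)², λ := μ^{1/3}·|k|^{2/3} if |k| ≥ μ and λ := k²/ν if |k| < μ, and α := 1 if |k| < μ and α := μ^{2/3}·|k|^{−2/3} if |k| ≥ μ. If Ω, Θ : [0,∞) → ℂ are differentiable and satisfy Ω′(t) = −ν·p(t)·Ω(t) − R·i·k·Θ(t) and Θ′(t) = −κ·p(t)·Θ(t) − (i·k/p(t))·Ω(t), then for all t ≥ 0: p(t)^{−1/2}·|(1 + c₂·α·i·(η − kt))·Ω(t)|² + p(t)^{1/2}·|(1 + c₂·α·i·(η − kt))·Θ(t)|² ≤ C·e^{−c₁·λ·t}·[ (k² + η²)^{−1/2}·|(1 + c₂·α·i·η)·Ω(0)|² + (k² + η²)^{1/2}·|(1 + c₂·α·i·η)·Θ(0)|²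 ]. -/

import Mathlib

open Real MeasureTheory

noncomputable section

/-- The moving-frame Laplacian symbol `p(t) = k² + (η − kt)²`. -/
def pfun (k η t : ℝ) : ℝ := k ^ 2 + (η - k * t) ^ 2

/-- Its time derivative `p′(t) = −2k(η − kt)`. -/
def pder (k η t : ℝ) : ℝ := -(2 * k * (η - k * t))

/-- The symmetrizing weight `G(t) = p′(t)/(|k|·p(t)^{1/2})`. -/
def Gfun (k η t : ℝ) : ℝ := pder k η t / (|k| * Real.sqrt (pfun k η t))

/-- The exponential weight `N(t) = exp(−G(t)/(2√R − 1))`. -/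
def Nfun (R k η t : ℝ) : ℝ := Real.exp (-(1 / (2 * Real.sqrt R - 1)) * Gfun k η t)

/-- The inviscid damping multiplier `𝔍(t) = (1/2)·arctan(η/k − t)`. -/
def Jfun (k η t : ℝ) : ℝ := (1 / 2) * Real.arctan (η / k - t)

/-- The effective diffusivity `μ`. -/
def muDef (R ν κ : ℝ) : ℝ :=
  min ν κ * (1 - 1 / (4 * Real.sqrt R) - 1 / (4 * Real.sqrt R) * (max ν κ / min ν κ))

/-- The decay rate `λ`. -/
def lamDef (ν μ k : ℝ) : ℝ :=
  if μ ≤ |k| then μ ^ ((1 : ℝ) / 3) * |k| ^ ((2 : ℝ) / 3) else k ^ 2 / ν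

/-- The weight `α`. -/
def alphaDef (μ k : ℝ) : ℝ :=
  if |k| < μ then 1 else μ ^ ((2 : ℝ) / 3) * |k| ^ (-(2 : ℝ) / 3)

/-- The weight `β`. -/
def betaDef (μ k : ℝ) : ℝ :=
  if |k| < μ then μ⁻¹ else μ ^ ((1 : ℝ) / 3) * |k| ^ (-(4 : ℝ) / 3)

/-- `(Z, Q)` is a solution of the linearized symmetrized Boussinesq–Couette system
at frequency `(k, η)`. -/
def IsSol (R ν κ k η : ℝ) (Z Q : ℝ → ℂ) : Prop :=
  ∀ t : ℝ, 0 ≤ t →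
    HasDerivAt Z ((((1 / 4) * (pder k η t / pfun k η t) : ℝ) : ℂ) * Z t
        - ((Real.sqrt R * (|k| / Real.sqrt (pfun k η t)) : ℝ) : ℂ) * Q t
        - ((ν * pfun k η t : ℝ) : ℂ) * Z t) t ∧
    HasDerivAt Q (-(((1 / 4) * (pder k η t / pfun k η t) : ℝ) : ℂ) * Q t
        + ((Real.sqrt R * (|k| / Real.sqrt (pfun k η t)) : ℝ) : ℂ) * Z t
        - ((κ * pfun k η t : ℝ) : ℂ) * Q t) t

/-- The hypocoercive pointwise energy functional `E_k`. -/
def energy (R cτ cα cβ μ k η : ℝ) (Z Q : ℝ → ℂ) (t : ℝ) : ℝ :=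
  (Nfun R k η t + cτ * Jfun k η t) * (‖Z t‖ ^ 2 + ‖Q t‖ ^ 2)
    + 1 / (2 * Real.sqrt R) * Gfun k η t * (Nfun R k η t + cτ * Jfun k η t)
        * (Z t * (starRingEnd ℂ) (Q t)).re
    + cα * alphaDef μ k *
        ((Nfun R k η t + cτ * Jfun k η t) * (η - k * t) ^ 2 * (‖Z t‖ ^ 2 + ‖Q t‖ ^ 2)
          + 1 / (2 * Real.sqrt R) * Gfun k η t * (Nfun R k η t + cτ * Jfun k η t)
              * (η - k * t) ^ 2 * (Z t * (starRingEnd ℂ) (Q t)).re)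
    + cβ * betaDef μ k *
        (k * (η - k * t) * (‖Z t‖ ^ 2 + ‖Q t‖ ^ 2)
          - 1 / (2 * Real.sqrt R) * Gfun k η t * (k * (η - k * t))
              * (Z t * (starRingEnd ℂ) (Q t)).re)

/-- The pointwise dissipation functional `D_k`. -/
def dissip (R cτ cα cβ μ k η : ℝ) (Z Q : ℝ → ℂ) (t : ℝ) : ℝ :=
  μ * pfun k η t * (‖Z t‖ ^ 2 + ‖Q t‖ ^ 2)
    + cτ * (k ^ 2 / pfun k η t) * (‖Z t‖ ^ 2 + ‖Q t‖ ^ 2)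
    + cα * alphaDef μ k * μ * pfun k η t * (η - k * t) ^ 2 * (‖Z t‖ ^ 2 + ‖Q t‖ ^ 2)
    + cτ * cα * alphaDef μ k * (k ^ 2 * (η - k * t) ^ 2 / pfun k η t)
        * (‖Z t‖ ^ 2 + ‖Q t‖ ^ 2)
    + 1 / Real.sqrt R * (|k| ^ 3 / (pfun k η t * Real.sqrt (pfun k η t)))
        * (‖Z t‖ ^ 2 + ‖Q t‖ ^ 2)
    + cα / Real.sqrt R * alphaDef μ k
        * (|k| ^ 3 * (η - k * t) ^ 2 / (pfun k η t * Real.sqrt (pfun k η t)))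
        * (‖Z t‖ ^ 2 + ‖Q t‖ ^ 2)
    + cβ * betaDef μ k * k ^ 2 * (‖Z t‖ ^ 2 + ‖Q t‖ ^ 2)

/-!
The energy `E = p^{-1/2}|Ω|² + R p^{1/2}|Θ|² - ((η - kt)/p^{1/2})·Im(Ω Θ̄)` has a cross term which
cancels the indefinite terms produced by the shear in the derivative of its diagonal part. What is
left is the dissipation, which controls `2μp` times the diagonal part (hence the formula for `μ`),
and an error of size `|k|³p^{-3/2}E`, which is absorbed by the weight `N` because `G` has derivative
`2|k|³p^{-3/2}`. Hence `N E` decays like `exp (-μ ∫ p)`, which is at most `exp (-μk²t³/12)`. The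
stretched exponential in `μk²t³` beats both the rate `λ` and the growth of the weight
`1 + (c₂α(η - kt))²`, in either frequency regime, so the hypocoercive correction costs nothing.
-/

section Gronwall

lemma le_mul_exp_integral_of_hasDerivAt_le {f f' a : ℝ → ℝ} {t₀ t : ℝ} (ht : t₀ ≤ t)
    (ha : Continuous a) (hf : ∀ s ∈ Set.Icc t₀ t, HasDerivAt f (f' s) s)
    (hle : ∀ s ∈ Set.Icc t₀ t, f' s ≤ a s * f s) :
    f t ≤ f t₀ * Real.exp (∫ s in t₀..t, a s) := by
  set I : ℝ → ℝ := fun s => ∫ x in t₀..s, a x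
  have hderiv : ∀ s ∈ Set.Icc t₀ t, HasDerivAt (fun x => f x * Real.exp (-I x))
      (f' s * Real.exp (-I s) + f s * (Real.exp (-I s) * -a s)) s := fun s hs =>
    (hf s hs).mul (ha.integral_hasStrictDerivAt t₀ s).hasDerivAt.neg.exp
  have hanti : AntitoneOn (fun x => f x * Real.exp (-I x)) (Set.Icc t₀ t) := by
    refine antitoneOn_of_hasDerivWithinAt_nonpos (convex_Icc t₀ t)
      (fun s hs => (hderiv s hs).continuousAt.continuousWithinAt)
      (fun s hs => (hderiv s (interior_subset hs)).hasDerivWithinAt) fun s hs => ?_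
    nlinarith [hle s (interior_subset hs), Real.exp_pos (-I s)]
  have hcompare : f t * Real.exp (-I t) ≤ f t₀ := by
    simpa [I] using hanti (Set.left_mem_Icc.2 ht) (Set.right_mem_Icc.2 ht) ht
  rwa [Real.exp_neg, ← div_eq_mul_inv, div_le_iff₀ (Real.exp_pos _)] at hcompare

end Gronwall

section Symbol

variable {R k : ℝ}

lemma pfun_pos (hk : k ≠ 0) (η t : ℝ) : 0 < pfun k η t := by
  unfold pfun; positivity

lemma hasDerivAt_pfun (k η t : ℝ) : HasDerivAt (pfun k η) (pder k η t) t := by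
  have hshift : HasDerivAt (fun s => η - k * s) (-k) t := by
    simpa using ((hasDerivAt_id t).const_mul k).const_sub η
  refine ((hshift.pow 2).const_add (k ^ 2)).congr_deriv ?_
  rw [pder]; ring

lemma continuous_pfun (k η : ℝ) : Continuous (pfun k η) := by
  unfold pfun; fun_prop

lemma hasDerivAt_sqrt_pfun (hk : k ≠ 0) (η t : ℝ) :
    HasDerivAt (fun s => √(pfun k η s)) (pder k η t / (2 * √(pfun k η t))) t :=
  (hasDerivAt_pfun k η t).sqrt (pfun_pos hk η t).ne'

lemma sq_mul_pow_three_div_le_integral_pfun (k η : ℝ) {t : ℝ} (ht : 0 ≤ t) :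
    k ^ 2 * t ^ 3 / 12 ≤ ∫ s in (0 : ℝ)..t, pfun k η s := by
  have hint : ∫ s in (0 : ℝ)..t, pfun k η s
      = k ^ 2 * t + t * (η - k * t / 2) ^ 2 + k ^ 2 * t ^ 3 / 12 := by
    have hprim : ∀ s ∈ Set.uIcc 0 t, HasDerivAt
        (fun x => k ^ 2 * x + (η ^ 2 * x - η * k * x ^ 2 + k ^ 2 / 3 * x ^ 3)) (pfun k η s) s := by
      intro s _
      have hid := hasDerivAt_id s
      refine ((hid.const_mul (k ^ 2)).add (((hid.const_mul (η ^ 2)).sub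
        ((hid.pow 2).const_mul (η * k))).add ((hid.pow 3).const_mul (k ^ 2 / 3)))).congr_deriv ?_
      simp only [pfun, id]
      ring
    rw [intervalIntegral.integral_eq_sub_of_hasDerivAt hprim
      ((continuous_pfun k η).intervalIntegrable 0 t)]
    ring
  rw [hint]
  have : 0 ≤ k ^ 2 * t + t * (η - k * t / 2) ^ 2 := by positivity
  linarith

lemma abs_Gfun_le_two (k η t : ℝ) : |Gfun k η t| ≤ 2 := by
  rw [Gfun, pder, abs_div, abs_neg, abs_mul, abs_mul, abs_two, abs_mul, abs_abs,
    abs_of_nonneg (Real.sqrt_nonneg _)]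
  refine div_le_of_le_mul₀ (by positivity) zero_le_two ?_
  have hshift : |η - k * t| ≤ √(pfun k η t) :=
    Real.abs_le_sqrt (by rw [pfun]; exact le_add_of_nonneg_left (sq_nonneg k))
  calc 2 * |k| * |η - k * t| ≤ 2 * |k| * √(pfun k η t) := by gcongr
    _ = 2 * (|k| * √(pfun k η t)) := by ring

lemma hasDerivAt_Gfun (hk : k ≠ 0) (η t : ℝ) :
    HasDerivAt (Gfun k η) (2 * |k| ^ 3 / √(pfun k η t) ^ 3) t := by
  have hq := hasDerivAt_sqrt_pfun hk η t
  have hq0 : √(pfun k η t) ≠ 0 := (Real.sqrt_pos.2 (pfun_pos hk η t)).ne'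
  have hk0 : |k| ≠ 0 := abs_ne_zero.2 hk
  have hpder : HasDerivAt (pder k η) (2 * k ^ 2) t := by
    refine ((((hasDerivAt_id t).const_mul k).const_sub η).const_mul (2 * k)).neg.congr_deriv ?_
    ring
  refine (hpder.div (hq.const_mul |k|) (mul_ne_zero hk0 hq0)).congr_deriv ?_
  have hsq : √(pfun k η t) ^ 2 = |k| ^ 2 + (η - k * t) ^ 2 := by
    rw [Real.sq_sqrt (pfun_pos hk η t).le, sq_abs, pfun]
  rw [pder]
  generalize √(pfun k η t) = q at *
  field_simp
  rw [hsq, ← sq_abs k]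
  ring

lemma Nfun_pos (R k η t : ℝ) : 0 < Nfun R k η t := Real.exp_pos _

lemma hasDerivAt_Nfun (R : ℝ) (hk : k ≠ 0) (η t : ℝ) :
    HasDerivAt (Nfun R k η) (Nfun R k η t *
      (-(1 / (2 * √R - 1)) * (2 * |k| ^ 3 / √(pfun k η t) ^ 3))) t :=
  ((hasDerivAt_Gfun hk η t).const_mul _).exp

lemma one_lt_two_mul_sqrt (hR : 1 / 4 < R) : 1 < 2 * √R := by
  have : 1 / 2 < √R := Real.lt_sqrt_of_sq_lt (by norm_num; linarith)
  linarith

lemma Nfun_le_exp_mul_Nfun (hR : 1 / 4 < R) (k η s t : ℝ) :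
    Nfun R k η s ≤ Real.exp (4 / (2 * √R - 1)) * Nfun R k η t := by
  have hgap : 0 < 2 * √R - 1 := sub_pos.2 (one_lt_two_mul_sqrt hR)
  have hG : Gfun k η t - Gfun k η s ≤ 4 := by
    linarith [(abs_le.1 (abs_Gfun_le_two k η t)).2, (abs_le.1 (abs_Gfun_le_two k η s)).1]
  rw [Nfun, Nfun, ← Real.exp_add, Real.exp_le_exp]
  calc -(1 / (2 * √R - 1)) * Gfun k η s
      = (Gfun k η t - Gfun k η s) / (2 * √R - 1) + -(1 / (2 * √R - 1)) * Gfun k η t := by ring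
    _ ≤ 4 / (2 * √R - 1) + -(1 / (2 * √R - 1)) * Gfun k η t := by gcongr

end Symbol

section Energy

/-- `(Ω, Θ)` solves at time `t` the vorticity–density system of the Couette flow with Richardson
number `R`, viscosity `ν` and thermal dissipation `κ`, at frequency `(k, η)` of the moving frame. -/
def IsModeSolAt (R ν κ k η : ℝ) (Ω Θ : ℝ → ℂ) (t : ℝ) : Prop :=
  HasDerivAt Ω (-((ν * pfun k η t : ℝ) : ℂ) * Ω t - (R : ℂ) * Complex.I * (k : ℂ) * Θ t) t ∧
    HasDerivAt Θ (-((κ * pfun k η t : ℝ) : ℂ) * Θ t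
      - Complex.I * (k : ℂ) / ((pfun k η t : ℝ) : ℂ) * Ω t) t

/-- The correlation `Im(Ω Θ̄)` of vorticity and density, through which the two modes exchange
energy. -/
def modeFlux (Ω Θ : ℝ → ℂ) (t : ℝ) : ℝ := (Ω t * (starRingEnd ℂ) (Θ t)).im

/-- The symmetrized size `p^{-1/2}|Ω|² + R p^{1/2}|Θ|²` of a mode. The paper's norm is the case
`R = 1`; with the Richardson number as `R`, the vorticity–density exchange conserves it. -/
def symNormSq (R k η : ℝ) (Ω Θ : ℝ → ℂ) (t : ℝ) : ℝ :=
  ‖Ω t‖ ^ 2 / √(pfun k η t) + R * √(pfun k η t) * ‖Θ t‖ ^ 2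

/-- The energy `symNormSq` corrected by a multiple of the flux that compensates the shear. The
coefficient `k/(2|k|)·G` of the flux equals `-(η - kt)/p^{1/2}`. -/
def symEnergy (R k η : ℝ) (Ω Θ : ℝ → ℂ) (t : ℝ) : ℝ :=
  symNormSq R k η Ω Θ t + k / (2 * |k|) * Gfun k η t * modeFlux Ω Θ t

variable {R ν κ k η t : ℝ} {Ω Θ : ℝ → ℂ}

namespace IsModeSolAt

lemma hasDerivAt_vorticity_norm_sq (h : IsModeSolAt R ν κ k η Ω Θ t) :
    HasDerivAt (fun s => ‖Ω s‖ ^ 2)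
      (-2 * ν * pfun k η t * ‖Ω t‖ ^ 2 - 2 * R * k * modeFlux Ω Θ t) t := by
  refine h.1.norm_sq.congr_deriv ?_
  simp only [Complex.inner, modeFlux, Complex.sq_norm, Complex.normSq_apply]
  simp only [neg_mul, Complex.mul_re, Complex.sub_re, Complex.neg_re, Complex.ofReal_re,
    Complex.ofReal_im, zero_mul, sub_zero, Complex.I_re, mul_zero, Complex.I_im, mul_one, sub_self,
    Complex.mul_im, add_zero, zero_add, zero_sub, sub_neg_eq_add, Complex.conj_re, Complex.sub_im,
    Complex.neg_im, Complex.conj_im, mul_neg]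
  ring

lemma hasDerivAt_density_norm_sq (h : IsModeSolAt R ν κ k η Ω Θ t) :
    HasDerivAt (fun s => ‖Θ s‖ ^ 2)
      (-2 * κ * pfun k η t * ‖Θ t‖ ^ 2 + 2 * k / pfun k η t * modeFlux Ω Θ t) t := by
  refine h.2.norm_sq.congr_deriv ?_
  simp only [Complex.inner, modeFlux, Complex.sq_norm, Complex.normSq_apply]
  simp only [neg_mul, Complex.mul_re, Complex.sub_re, Complex.neg_re, Complex.ofReal_re,
    Complex.ofReal_im, zero_mul, sub_zero, Complex.div_ofReal_re, Complex.I_re, Complex.I_im,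
    mul_zero, sub_self, zero_div, Complex.div_ofReal_im, Complex.mul_im, one_mul, zero_add,
    zero_sub, sub_neg_eq_add, Complex.conj_re, Complex.sub_im, Complex.neg_im, add_zero,
    Complex.conj_im, mul_neg]
  ring

lemma hasDerivAt_modeFlux (h : IsModeSolAt R ν κ k η Ω Θ t) :
    HasDerivAt (modeFlux Ω Θ) (-(ν + κ) * pfun k η t * modeFlux Ω Θ t
      + (k / pfun k η t * ‖Ω t‖ ^ 2 - R * k * ‖Θ t‖ ^ 2)) t := by
  refine (Complex.imCLM.hasFDerivAt.comp_hasDerivAt t (h.1.mul h.2.star)).congr_deriv ?_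
  simp only [modeFlux, Complex.sq_norm, Complex.normSq_apply]
  simp only [neg_mul, RCLike.star_def, star_sub, star_neg, star_mul', Complex.conj_ofReal,
    star_div₀, Complex.conj_I, Complex.imCLM_apply, Complex.add_im, Complex.mul_im, Complex.sub_re,
    Complex.neg_re, Complex.mul_re, Complex.ofReal_re, Complex.ofReal_im, zero_mul, sub_zero,
    Complex.I_re, mul_zero, Complex.I_im, mul_one, sub_self, add_zero, zero_add, zero_sub,
    sub_neg_eq_add, Complex.conj_im, mul_neg, Complex.sub_im, Complex.neg_im, Complex.conj_re,
    neg_neg, Complex.div_ofReal_re, neg_zero, zero_div, Complex.div_ofReal_im, one_mul,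
    neg_add_rev]
  ring

lemma hasDerivAt_symNormSq (hk : k ≠ 0) (h : IsModeSolAt R ν κ k η Ω Θ t) :
    HasDerivAt (symNormSq R k η Ω Θ)
      (-2 * pfun k η t * (ν * (‖Ω t‖ ^ 2 / √(pfun k η t))
          + κ * (R * √(pfun k η t) * ‖Θ t‖ ^ 2))
        - pder k η t / (2 * pfun k η t) * (‖Ω t‖ ^ 2 / √(pfun k η t)
          - R * √(pfun k η t) * ‖Θ t‖ ^ 2)) t := by
  have hq := hasDerivAt_sqrt_pfun hk η t
  have hq0 : √(pfun k η t) ≠ 0 := (Real.sqrt_pos.2 (pfun_pos hk η t)).ne'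
  refine ((h.hasDerivAt_vorticity_norm_sq.div hq hq0).add
    ((hq.const_mul R).mul h.hasDerivAt_density_norm_sq)).congr_deriv ?_
  have hpq : pfun k η t = √(pfun k η t) ^ 2 := (Real.sq_sqrt (pfun_pos hk η t).le).symm
  generalize √(pfun k η t) = q at *
  rw [hpq]
  field_simp
  ring

lemma hasDerivAt_symEnergy (hk : k ≠ 0) (h : IsModeSolAt R ν κ k η Ω Θ t) :
    HasDerivAt (symEnergy R k η Ω Θ)
      (-2 * pfun k η t * (ν * (‖Ω t‖ ^ 2 / √(pfun k η t))
          + κ * (R * √(pfun k η t) * ‖Θ t‖ ^ 2))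
        - (ν + κ) * pfun k η t * (k / (2 * |k|) * Gfun k η t * modeFlux Ω Θ t)
        + k / (2 * |k|) * (2 * |k| ^ 3 / √(pfun k η t) ^ 3) * modeFlux Ω Θ t) t := by
  have hcross := ((hasDerivAt_Gfun hk η t).const_mul (k / (2 * |k|))).mul h.hasDerivAt_modeFlux
  refine ((h.hasDerivAt_symNormSq hk).add hcross).congr_deriv ?_
  have hcancel : k / (2 * |k|) * Gfun k η t
        * (k / pfun k η t * ‖Ω t‖ ^ 2 - R * k * ‖Θ t‖ ^ 2)
      = pder k η t / (2 * pfun k η t) * (‖Ω t‖ ^ 2 / √(pfun k η t)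
          - R * √(pfun k η t) * ‖Θ t‖ ^ 2) := by
    have hq0 : √(pfun k η t) ≠ 0 := (Real.sqrt_pos.2 (pfun_pos hk η t)).ne'
    have hpq : pfun k η t = √(pfun k η t) ^ 2 := (Real.sq_sqrt (pfun_pos hk η t).le).symm
    have hk0 : |k| ≠ 0 := abs_ne_zero.2 hk
    rw [Gfun]
    generalize √(pfun k η t) = q at *
    rw [hpq]
    field_simp
    rw [sq_abs]
  linear_combination hcancel

end IsModeSolAt

lemma symNormSq_nonneg (hR : 0 ≤ R) (k η : ℝ) (Ω Θ : ℝ → ℂ) (t : ℝ) :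
    0 ≤ symNormSq R k η Ω Θ t := by
  unfold symNormSq; positivity

lemma two_mul_sqrt_mul_abs_modeFlux_le (hR : 0 ≤ R) (hk : k ≠ 0) (η : ℝ) (Ω Θ : ℝ → ℂ) (t : ℝ) :
    2 * √R * |modeFlux Ω Θ t| ≤ symNormSq R k η Ω Θ t := by
  have hq : 0 < √(pfun k η t) := Real.sqrt_pos.2 (pfun_pos hk η t)
  have hflux : |modeFlux Ω Θ t| ≤ ‖Ω t‖ * ‖Θ t‖ :=
    (Complex.abs_im_le_norm _).trans_eq (by simp)
  calc 2 * √R * |modeFlux Ω Θ t| ≤ 2 * √R * (‖Ω t‖ * ‖Θ t‖) := by gcongr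
    _ = 2 * ‖Ω t‖ * (√R * √(pfun k η t) * ‖Θ t‖) / √(pfun k η t) := by field_simp
    _ ≤ (‖Ω t‖ ^ 2 + (√R * √(pfun k η t) * ‖Θ t‖) ^ 2) / √(pfun k η t) := by
      gcongr; exact two_mul_le_add_sq _ _
    _ = symNormSq R k η Ω Θ t := by
      rw [symNormSq, mul_pow, mul_pow, Real.sq_sqrt hR]; field_simp

lemma abs_div_two_mul_abs_le (k : ℝ) : |k / (2 * |k|)| ≤ 1 / 2 := by
  rw [abs_div, abs_mul, abs_two, abs_abs]
  exact div_le_of_le_mul₀ (by positivity) (by norm_num) (by linarith)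

lemma abs_flux_coeff_le_one (k η t : ℝ) : |k / (2 * |k|) * Gfun k η t| ≤ 1 := by
  calc |k / (2 * |k|) * Gfun k η t| = |k / (2 * |k|)| * |Gfun k η t| := abs_mul _ _
    _ ≤ 1 / 2 * 2 := by gcongr; exacts [abs_div_two_mul_abs_le k, abs_Gfun_le_two k η t]
    _ = 1 := by norm_num

lemma two_mul_sqrt_mul_abs_symEnergy_sub_le (hR : 0 ≤ R) (hk : k ≠ 0) (η : ℝ) (Ω Θ : ℝ → ℂ)
    (t : ℝ) :
    2 * √R * |symEnergy R k η Ω Θ t - symNormSq R k η Ω Θ t| ≤ symNormSq R k η Ω Θ t := by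
  rw [symEnergy, add_sub_cancel_left, abs_mul]
  calc 2 * √R * (|k / (2 * |k|) * Gfun k η t| * |modeFlux Ω Θ t|)
      ≤ 2 * √R * (1 * |modeFlux Ω Θ t|) := by gcongr; exact abs_flux_coeff_le_one k η t
    _ ≤ symNormSq R k η Ω Θ t := by
      rw [one_mul]; exact two_mul_sqrt_mul_abs_modeFlux_le hR hk η Ω Θ t

lemma symNormSq_le_symEnergy (hR : 0 ≤ R) (hk : k ≠ 0) (η : ℝ) (Ω Θ : ℝ → ℂ) (t : ℝ) :
    (2 * √R - 1) * symNormSq R k η Ω Θ t ≤ 2 * √R * symEnergy R k η Ω Θ t := by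
  have hclose := two_mul_sqrt_mul_abs_symEnergy_sub_le hR hk η Ω Θ t
  have hneg := neg_abs_le (symEnergy R k η Ω Θ t - symNormSq R k η Ω Θ t)
  nlinarith [Real.sqrt_nonneg R]

lemma symEnergy_le_symNormSq (hR : 0 ≤ R) (hk : k ≠ 0) (η : ℝ) (Ω Θ : ℝ → ℂ) (t : ℝ) :
    2 * √R * symEnergy R k η Ω Θ t ≤ (2 * √R + 1) * symNormSq R k η Ω Θ t := by
  have hclose := two_mul_sqrt_mul_abs_symEnergy_sub_le hR hk η Ω Θ t
  have hpos := le_abs_self (symEnergy R k η Ω Θ t - symNormSq R k η Ω Θ t)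
  nlinarith [Real.sqrt_nonneg R]

lemma symEnergy_nonneg (hR : 1 / 4 < R) (hk : k ≠ 0) (η : ℝ) (Ω Θ : ℝ → ℂ) (t : ℝ) :
    0 ≤ symEnergy R k η Ω Θ t := by
  have hS := one_lt_two_mul_sqrt hR
  have hle := symNormSq_le_symEnergy (R := R) (by linarith) hk η Ω Θ t
  have hN := symNormSq_nonneg (R := R) (by linarith) k η Ω Θ t
  nlinarith

lemma symEnergy_le_two_mul_symNormSq (hR : 1 / 4 < R) (hk : k ≠ 0) (η : ℝ) (Ω Θ : ℝ → ℂ)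
    (t : ℝ) : symEnergy R k η Ω Θ t ≤ 2 * symNormSq R k η Ω Θ t := by
  have hS := one_lt_two_mul_sqrt hR
  have hle := symEnergy_le_symNormSq (R := R) (by linarith) hk η Ω Θ t
  have hN := symNormSq_nonneg (R := R) (by linarith) k η Ω Θ t
  nlinarith

end Energy

section Diffusivity

variable {R ν κ : ℝ}

lemma muDef_eq (R : ℝ) (hν : 0 < ν) (hκ : 0 < κ) :
    muDef R ν κ = min ν κ - (ν + κ) / (4 * √R) := by
  have hmin : min ν κ ≠ 0 := (lt_min hν hκ).ne'
  rw [muDef, ← min_add_max ν κ]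
  field_simp
  ring

lemma muDef_le_left (R : ℝ) (hν : 0 < ν) (hκ : 0 < κ) : muDef R ν κ ≤ ν := by
  rw [muDef_eq R hν hκ]
  have : 0 ≤ (ν + κ) / (4 * √R) := by positivity
  linarith [min_le_left ν κ]

lemma muDef_pos (hR : 0 < R) (hν : 0 < ν) (hκ : 0 < κ)
    (hratio : max ν κ / min ν κ < 4 * √R - 1) : 0 < muDef R ν κ := by
  have hmax : max ν κ < (4 * √R - 1) * min ν κ := (div_lt_iff₀ (lt_min hν hκ)).1 hratio
  rw [muDef_eq R hν hκ, sub_pos, div_lt_iff₀ (by positivity), ← min_add_max ν κ]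
  linarith

end Diffusivity

section Decay

variable {R ν κ k η t : ℝ} {Ω Θ : ℝ → ℂ}

lemma dissipation_le (hR : 0 < R) (hν : 0 < ν) (hκ : 0 < κ) (hk : k ≠ 0) (η : ℝ)
    (Ω Θ : ℝ → ℂ) (t : ℝ) :
    -2 * pfun k η t * (ν * (‖Ω t‖ ^ 2 / √(pfun k η t)) + κ * (R * √(pfun k η t) * ‖Θ t‖ ^ 2))
        - (ν + κ) * pfun k η t * (k / (2 * |k|) * Gfun k η t * modeFlux Ω Θ t)
      ≤ -(2 * muDef R ν κ * pfun k η t) * symNormSq R k η Ω Θ t := by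
  have hp := pfun_pos hk η t
  have hdiag : min ν κ * symNormSq R k η Ω Θ t
      ≤ ν * (‖Ω t‖ ^ 2 / √(pfun k η t)) + κ * (R * √(pfun k η t) * ‖Θ t‖ ^ 2) := by
    rw [symNormSq, mul_add]
    gcongr
    exacts [min_le_left ν κ, min_le_right ν κ]
  have hcross : -(k / (2 * |k|) * Gfun k η t * modeFlux Ω Θ t)
      ≤ symNormSq R k η Ω Θ t / (2 * √R) := by
    rw [le_div_iff₀' (by positivity)]
    refine le_trans ?_ (two_mul_sqrt_mul_abs_symEnergy_sub_le hR.le hk η Ω Θ t)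
    rw [symEnergy, add_sub_cancel_left]
    gcongr
    exact neg_le_abs _
  calc _ = -2 * pfun k η t * (ν * (‖Ω t‖ ^ 2 / √(pfun k η t))
            + κ * (R * √(pfun k η t) * ‖Θ t‖ ^ 2))
          + (ν + κ) * pfun k η t * -(k / (2 * |k|) * Gfun k η t * modeFlux Ω Θ t) := by ring
    _ ≤ -2 * pfun k η t * (min ν κ * symNormSq R k η Ω Θ t)
          + (ν + κ) * pfun k η t * (symNormSq R k η Ω Θ t / (2 * √R)) :=
      add_le_add (mul_le_mul_of_nonpos_left hdiag (by linarith)) (by gcongr)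
    _ = -(2 * muDef R ν κ * pfun k η t) * symNormSq R k η Ω Θ t := by
      rw [muDef_eq R hν hκ]; field_simp; ring

lemma shear_error_le (hR : 1 / 4 < R) (hk : k ≠ 0) {g : ℝ} (hg : 0 ≤ g) (η : ℝ)
    (Ω Θ : ℝ → ℂ) (t : ℝ) :
    k / (2 * |k|) * g * modeFlux Ω Θ t ≤ 1 / (2 * √R - 1) * g * symEnergy R k η Ω Θ t := by
  have hgap : 0 < 2 * √R - 1 := sub_pos.2 (one_lt_two_mul_sqrt hR)
  have hR0 : 0 ≤ R := by linarith
  have hS : 0 < 2 * √R := by linarith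
  have hsign : |k / (2 * |k|)| ≤ 1 := (abs_div_two_mul_abs_le k).trans (by norm_num)
  have hflux : |modeFlux Ω Θ t| ≤ 1 / (2 * √R - 1) * symEnergy R k η Ω Θ t := by
    rw [one_div_mul_eq_div, le_div_iff₀' hgap]
    refine le_of_mul_le_mul_left ?_ hS
    calc 2 * √R * ((2 * √R - 1) * |modeFlux Ω Θ t|)
        = (2 * √R - 1) * (2 * √R * |modeFlux Ω Θ t|) := by ring
      _ ≤ (2 * √R - 1) * symNormSq R k η Ω Θ t := by
        gcongr; exact two_mul_sqrt_mul_abs_modeFlux_le hR0 hk η Ω Θ t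
      _ ≤ 2 * √R * symEnergy R k η Ω Θ t := symNormSq_le_symEnergy hR0 hk η Ω Θ t
  calc k / (2 * |k|) * g * modeFlux Ω Θ t ≤ |k / (2 * |k|) * g * modeFlux Ω Θ t| := le_abs_self _
    _ = |k / (2 * |k|)| * g * |modeFlux Ω Θ t| := by rw [abs_mul, abs_mul, abs_of_nonneg hg]
    _ ≤ 1 * g * (1 / (2 * √R - 1) * symEnergy R k η Ω Θ t) := by gcongr
    _ = 1 / (2 * √R - 1) * g * symEnergy R k η Ω Θ t := by ring

lemma IsModeSolAt.exists_hasDerivAt_symEnergy_le (hR : 1 / 4 < R) (hν : 0 < ν) (hκ : 0 < κ)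
    (hμ : 0 ≤ muDef R ν κ) (hk : k ≠ 0) (h : IsModeSolAt R ν κ k η Ω Θ t) :
    ∃ E', HasDerivAt (symEnergy R k η Ω Θ) E' t ∧
      E' ≤ (-(muDef R ν κ * pfun k η t) + 1 / (2 * √R - 1) * (2 * |k| ^ 3 / √(pfun k η t) ^ 3))
        * symEnergy R k η Ω Θ t := by
  refine ⟨_, h.hasDerivAt_symEnergy hk, ?_⟩
  have hdissip := dissipation_le (R := R) (by linarith) hν hκ hk η Ω Θ t
  have hshear := shear_error_le hR hk (g := 2 * |k| ^ 3 / √(pfun k η t) ^ 3) (by positivity) η Ω Θ t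
  have hnorm : muDef R ν κ * pfun k η t * symEnergy R k η Ω Θ t
      ≤ muDef R ν κ * pfun k η t * (2 * symNormSq R k η Ω Θ t) :=
    mul_le_mul_of_nonneg_left (symEnergy_le_two_mul_symNormSq hR hk η Ω Θ t)
      (mul_nonneg hμ (pfun_pos hk η t).le)
  linarith

lemma Nfun_mul_symEnergy_le (hR : 1 / 4 < R) (hν : 0 < ν) (hκ : 0 < κ)
    (hμ : 0 ≤ muDef R ν κ) (hk : k ≠ 0) (h : ∀ s, 0 ≤ s → IsModeSolAt R ν κ k η Ω Θ s)
    (ht : 0 ≤ t) :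
    Nfun R k η t * symEnergy R k η Ω Θ t
      ≤ Nfun R k η 0 * symEnergy R k η Ω Θ 0 * Real.exp (-(muDef R ν κ * k ^ 2 * t ^ 3 / 12)) := by
  choose! E' hE' hE'_le using fun s (hs : 0 ≤ s) =>
    (h s hs).exists_hasDerivAt_symEnergy_le hR hν hκ hμ hk
  have hgronwall := le_mul_exp_integral_of_hasDerivAt_le ht
    ((continuous_pfun k η).const_mul (-muDef R ν κ))
    (fun s hs => (hasDerivAt_Nfun R hk η s).mul (hE' s hs.1)) fun s hs => by
      have hweighted := mul_le_mul_of_nonneg_left (hE'_le s hs.1) (Nfun_pos R k η s).le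
      simp only [Pi.mul_apply]
      linarith
  refine hgronwall.trans ?_
  have hinit : 0 ≤ Nfun R k η 0 * symEnergy R k η Ω Θ 0 :=
    mul_nonneg (Nfun_pos R k η 0).le (symEnergy_nonneg hR hk η Ω Θ 0)
  refine mul_le_mul_of_nonneg_left (Real.exp_le_exp.2 ?_) hinit
  rw [intervalIntegral.integral_const_mul, neg_mul, neg_le_neg_iff, mul_assoc, mul_div_assoc]
  exact mul_le_mul_of_nonneg_left (sq_mul_pow_three_div_le_integral_pfun k η ht) hμ

/-- The factor lost in replacing `N·E` by `symNormSq` at both ends of the decay estimate. -/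
def energyLoss (R : ℝ) : ℝ := (2 * √R + 1) / (2 * √R - 1) * Real.exp (4 / (2 * √R - 1))

lemma energyLoss_pos (hR : 1 / 4 < R) : 0 < energyLoss R := by
  have hgap : 0 < 2 * √R - 1 := sub_pos.2 (one_lt_two_mul_sqrt hR)
  unfold energyLoss; positivity

lemma symNormSq_le_energyLoss_mul (hR : 1 / 4 < R) (hν : 0 < ν) (hκ : 0 < κ)
    (hμ : 0 ≤ muDef R ν κ) (hk : k ≠ 0) (h : ∀ s, 0 ≤ s → IsModeSolAt R ν κ k η Ω Θ s)
    (ht : 0 ≤ t) :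
    symNormSq R k η Ω Θ t ≤ energyLoss R * symNormSq R k η Ω Θ 0
      * Real.exp (-(muDef R ν κ * k ^ 2 * t ^ 3 / 12)) := by
  have hgap : 0 < 2 * √R - 1 := sub_pos.2 (one_lt_two_mul_sqrt hR)
  have hR0 : 0 ≤ R := by linarith
  have hN := Nfun_pos R k η t
  have hE0 := symEnergy_nonneg hR hk η Ω Θ 0
  set D := Real.exp (-(muDef R ν κ * k ^ 2 * t ^ 3 / 12))
  set W := Real.exp (4 / (2 * √R - 1)) with hW
  have henergy : symEnergy R k η Ω Θ t ≤ W * symEnergy R k η Ω Θ 0 * D := by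
    refine le_of_mul_le_mul_left ?_ hN
    calc Nfun R k η t * symEnergy R k η Ω Θ t
        ≤ Nfun R k η 0 * symEnergy R k η Ω Θ 0 * D :=
          Nfun_mul_symEnergy_le hR hν hκ hμ hk h ht
      _ ≤ W * Nfun R k η t * symEnergy R k η Ω Θ 0 * D := by
        gcongr; exact Nfun_le_exp_mul_Nfun hR k η 0 t
      _ = Nfun R k η t * (W * symEnergy R k η Ω Θ 0 * D) := by ring
  refine le_of_mul_le_mul_left ?_ hgap
  calc (2 * √R - 1) * symNormSq R k η Ω Θ t ≤ 2 * √R * symEnergy R k η Ω Θ t :=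
        symNormSq_le_symEnergy hR0 hk η Ω Θ t
    _ ≤ 2 * √R * (W * symEnergy R k η Ω Θ 0 * D) := by gcongr
    _ = W * (2 * √R * symEnergy R k η Ω Θ 0) * D := by ring
    _ ≤ W * ((2 * √R + 1) * symNormSq R k η Ω Θ 0) * D := by
      gcongr W * ?_ * D; exact symEnergy_le_symNormSq hR0 hk η Ω Θ 0
    _ = (2 * √R - 1) * (energyLoss R * symNormSq R k η Ω Θ 0 * D) := by
      rw [energyLoss, ← hW]; field_simp

lemma min_mul_symNormSq_one_le (R k η : ℝ) (Ω Θ : ℝ → ℂ) (t : ℝ) :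
    min 1 R * symNormSq 1 k η Ω Θ t ≤ symNormSq R k η Ω Θ t := by
  rw [symNormSq, symNormSq, one_mul, mul_add, ← mul_assoc]
  gcongr
  · exact mul_le_of_le_one_left (by positivity) (min_le_left 1 R)
  · exact min_le_right 1 R

lemma symNormSq_le_max_mul_symNormSq_one (R k η : ℝ) (Ω Θ : ℝ → ℂ) (t : ℝ) :
    symNormSq R k η Ω Θ t ≤ max 1 R * symNormSq 1 k η Ω Θ t := by
  rw [symNormSq, symNormSq, one_mul, mul_add, ← mul_assoc]
  gcongr
  · exact le_mul_of_one_le_left (by positivity) (le_max_left 1 R)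
  · exact le_max_right 1 R

lemma symNormSq_one_le (hR : 1 / 4 < R) (hν : 0 < ν) (hκ : 0 < κ)
    (hμ : 0 ≤ muDef R ν κ) (hk : k ≠ 0) (h : ∀ s, 0 ≤ s → IsModeSolAt R ν κ k η Ω Θ s)
    (ht : 0 ≤ t) :
    symNormSq 1 k η Ω Θ t ≤ max 1 R / min 1 R * energyLoss R * symNormSq 1 k η Ω Θ 0
      * Real.exp (-(muDef R ν κ * k ^ 2 * t ^ 3 / 12)) := by
  have hmin : 0 < min 1 R := lt_min one_pos (by linarith)
  have hloss := energyLoss_pos hR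
  refine le_of_mul_le_mul_left ?_ hmin
  set D := Real.exp (-(muDef R ν κ * k ^ 2 * t ^ 3 / 12))
  calc min 1 R * symNormSq 1 k η Ω Θ t ≤ symNormSq R k η Ω Θ t :=
        min_mul_symNormSq_one_le R k η Ω Θ t
    _ ≤ energyLoss R * symNormSq R k η Ω Θ 0 * D :=
      symNormSq_le_energyLoss_mul hR hν hκ hμ hk h ht
    _ ≤ energyLoss R * (max 1 R * symNormSq 1 k η Ω Θ 0) * D := by
      gcongr; exact symNormSq_le_max_mul_symNormSq_one R k η Ω Θ 0
    _ = min 1 R * (max 1 R / min 1 R * energyLoss R * symNormSq 1 k η Ω Θ 0 * D) := by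
      field_simp

end Decay

section Rates

lemma pow_le_one_add_pow {s : ℝ} (hs : 0 ≤ s) {i j : ℕ} (hij : i ≤ j) : s ^ i ≤ 1 + s ^ j := by
  rcases le_total s 1 with hs1 | hs1
  · exact (pow_le_one₀ hs hs1).trans (le_add_of_nonneg_right (pow_nonneg hs j))
  · exact (pow_le_pow_right₀ hs1 hij).trans (le_add_of_nonneg_left zero_le_one)

variable {μ ν k t : ℝ}

lemma pow_three_lamDef (hμ : 0 < μ) (hk : μ ≤ |k|) (ν : ℝ) :
    lamDef ν μ k ^ 3 = μ * k ^ 2 := by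
  rw [lamDef, if_pos hk, mul_pow, ← Real.rpow_mul_natCast hμ.le,
    ← Real.rpow_mul_natCast (abs_nonneg k), ← sq_abs k]
  norm_num

lemma lamDef_nonneg (hμ : 0 < μ) (hk : μ ≤ |k|) (ν : ℝ) : 0 ≤ lamDef ν μ k := by
  rw [lamDef, if_pos hk]; positivity

lemma abs_alphaDef_mul_le_lamDef (hμ : 0 < μ) (hk : μ ≤ |k|) (ν : ℝ) :
    |alphaDef μ k * k| ≤ lamDef ν μ k := by
  have hk0 : 0 < |k| := hμ.trans_le hk
  have hα : |alphaDef μ k * k| = μ ^ ((2 : ℝ) / 3) * |k| ^ ((1 : ℝ) / 3) := by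
    rw [alphaDef, if_neg hk.not_gt, abs_mul, abs_of_nonneg (by positivity), mul_assoc,
      ← Real.rpow_add_one hk0.ne']
    norm_num
  rw [hα, lamDef, if_pos hk]
  calc μ ^ ((2 : ℝ) / 3) * |k| ^ ((1 : ℝ) / 3)
      = μ ^ ((1 : ℝ) / 3) * μ ^ ((1 : ℝ) / 3) * |k| ^ ((1 : ℝ) / 3) := by
        rw [← Real.rpow_add hμ]; norm_num
    _ ≤ μ ^ ((1 : ℝ) / 3) * |k| ^ ((1 : ℝ) / 3) * |k| ^ ((1 : ℝ) / 3) := by gcongr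
    _ = μ ^ ((1 : ℝ) / 3) * |k| ^ ((2 : ℝ) / 3) := by
        rw [mul_assoc, ← Real.rpow_add hk0]; norm_num

lemma div_sq_mul_pow_le_one_add (hμ : 0 < μ) (hk : |k| ≤ μ) (ht : 0 ≤ t) {i : ℕ} (hi : i ≤ 3) :
    (k / μ) ^ 2 * (μ * t) ^ i ≤ 1 + μ * k ^ 2 * t ^ 3 := by
  have hle : (k / μ) ^ 2 ≤ 1 := by
    rw [div_pow, div_le_one (by positivity)]
    exact sq_le_sq.2 (hk.trans (le_abs_self μ))
  calc (k / μ) ^ 2 * (μ * t) ^ i ≤ (k / μ) ^ 2 * (1 + (μ * t) ^ 3) := by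
        gcongr; exact pow_le_one_add_pow (by positivity) hi
    _ = (k / μ) ^ 2 + μ * k ^ 2 * t ^ 3 := by field_simp
    _ ≤ 1 + μ * k ^ 2 * t ^ 3 := by gcongr

lemma lamDef_mul_le_one_add (hμ : 0 < μ) (hμν : μ ≤ ν) (k : ℝ) (ht : 0 ≤ t) :
    lamDef ν μ k * t ≤ 1 + μ * k ^ 2 * t ^ 3 := by
  rcases le_or_gt μ |k| with hk | hk
  · have hle := pow_le_one_add_pow (mul_nonneg (lamDef_nonneg hμ hk ν) ht) (show 1 ≤ 3 by norm_num)
    rwa [pow_one, mul_pow, pow_three_lamDef hμ hk] at hle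
  · calc lamDef ν μ k * t = k ^ 2 / ν * t := by rw [lamDef, if_neg hk.not_ge]
      _ ≤ k ^ 2 / μ * t := by gcongr
      _ = (k / μ) ^ 2 * (μ * t) ^ 1 := by field_simp
      _ ≤ 1 + μ * k ^ 2 * t ^ 3 := div_sq_mul_pow_le_one_add hμ hk.le ht (by norm_num)

lemma alphaDef_mul_sq_le_one_add (hμ : 0 < μ) (k : ℝ) (ht : 0 ≤ t) :
    (alphaDef μ k * (k * t)) ^ 2 ≤ 1 + μ * k ^ 2 * t ^ 3 := by
  rcases le_or_gt μ |k| with hk | hk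
  · calc (alphaDef μ k * (k * t)) ^ 2 = |alphaDef μ k * k| ^ 2 * t ^ 2 := by rw [sq_abs]; ring
      _ ≤ lamDef 1 μ k ^ 2 * t ^ 2 := by gcongr; exact abs_alphaDef_mul_le_lamDef hμ hk 1
      _ = (lamDef 1 μ k * t) ^ 2 := (mul_pow _ _ _).symm
      _ ≤ 1 + (lamDef 1 μ k * t) ^ 3 :=
        pow_le_one_add_pow (mul_nonneg (lamDef_nonneg hμ hk 1) ht) (by norm_num)
      _ = 1 + μ * k ^ 2 * t ^ 3 := by rw [mul_pow, pow_three_lamDef hμ hk]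
  · calc (alphaDef μ k * (k * t)) ^ 2 = (k / μ) ^ 2 * (μ * t) ^ 2 := by
          rw [alphaDef, if_pos hk]; field_simp
      _ ≤ 1 + μ * k ^ 2 * t ^ 3 := div_sq_mul_pow_le_one_add hμ hk.le ht (by norm_num)

lemma one_add_sq_alphaDef_mul_le (hμ : 0 < μ) (c k η : ℝ) (ht : 0 ≤ t) :
    1 + (c * alphaDef μ k * (η - k * t)) ^ 2
      ≤ 2 * (1 + c ^ 2) * (1 + μ * k ^ 2 * t ^ 3) * (1 + (c * alphaDef μ k * η) ^ 2) := by
  set x := μ * k ^ 2 * t ^ 3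
  have hx0 : 0 ≤ x := by positivity
  have hgrowth : c ^ 2 * (alphaDef μ k * (k * t)) ^ 2 ≤ c ^ 2 * (1 + x) := by
    gcongr; exact alphaDef_mul_sq_le_one_add hμ k ht
  have hsplit : (c * alphaDef μ k * (η - k * t)) ^ 2
      ≤ 2 * ((c * alphaDef μ k * η) ^ 2 + c ^ 2 * (alphaDef μ k * (k * t)) ^ 2) := by
    nlinarith [sq_nonneg (c * alphaDef μ k * (η + k * t))]
  nlinarith [mul_nonneg hx0 (sq_nonneg c), mul_nonneg hx0 (sq_nonneg (c * alphaDef μ k * η)),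
    mul_nonneg (mul_nonneg (sq_nonneg c) (by positivity : 0 ≤ 1 + x))
      (sq_nonneg (c * alphaDef μ k * η))]

lemma one_add_mul_exp_neg_le {x y δ : ℝ} (hy : y ≤ 1 + x) (hδ : 0 < δ) (hδ2 : δ ≤ 2) :
    (1 + x) * Real.exp (-(δ * x))
      ≤ 2 / δ * Real.exp (δ / 2) * Real.exp (-(δ / 2 * y)) := by
  have hlinear : 1 + x ≤ 2 / δ * Real.exp (δ / 2 * x) := by
    rw [div_mul_eq_mul_div, le_div_iff₀' hδ]
    linarith [Real.add_one_le_exp (δ / 2 * x)]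
  calc (1 + x) * Real.exp (-(δ * x))
      ≤ 2 / δ * Real.exp (δ / 2 * x) * Real.exp (-(δ * x)) := by gcongr
    _ = 2 / δ * Real.exp (-(δ / 2 * x)) := by rw [mul_assoc, ← Real.exp_add]; ring_nf
    _ ≤ 2 / δ * Real.exp (δ / 2 + -(δ / 2 * y)) := by gcongr; nlinarith
    _ = 2 / δ * Real.exp (δ / 2) * Real.exp (-(δ / 2 * y)) := by rw [Real.exp_add, mul_assoc]

end Rates

lemma norm_one_add_mul_I_mul_sq (y : ℝ) (z : ℂ) :
    ‖(1 + (y : ℂ) * Complex.I) * z‖ ^ 2 = (1 + y ^ 2) * ‖z‖ ^ 2 := by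
  have hmult : ‖1 + (y : ℂ) * Complex.I‖ ^ 2 = 1 + y ^ 2 := by
    rw [Complex.sq_norm, ← Complex.ofReal_one, Complex.normSq_add_mul_I, one_pow]
  rw [norm_mul, mul_pow, hmult]

lemma rpow_mul_norm_sq_add_eq_symNormSq (k η y : ℝ) (Ω Θ : ℝ → ℂ) (t : ℝ) :
    pfun k η t ^ (-(1 : ℝ) / 2) * ‖(1 + (y : ℂ) * Complex.I) * Ω t‖ ^ 2
        + pfun k η t ^ ((1 : ℝ) / 2) * ‖(1 + (y : ℂ) * Complex.I) * Θ t‖ ^ 2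
      = (1 + y ^ 2) * symNormSq 1 k η Ω Θ t := by
  have hp : 0 ≤ pfun k η t := by unfold pfun; positivity
  rw [norm_one_add_mul_I_mul_sq, norm_one_add_mul_I_mul_sq, neg_div, Real.rpow_neg hp,
    ← Real.sqrt_eq_rpow, symNormSq]
  ring

/-- The constant `C` of the theorem for the Richardson number `R` and `c₂ = c`. -/
def decayConst (R c : ℝ) : ℝ :=
  2 * (1 + c ^ 2) * (24 * Real.exp (1 / 24)) * (max 1 R / min 1 R * energyLoss R)

lemma decayConst_pos {R : ℝ} (hR : 1 / 4 < R) (c : ℝ) : 0 < decayConst R c := by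
  have hratio : 0 < max 1 R / min 1 R := div_pos (by positivity) (lt_min one_pos (by linarith))
  exact mul_pos (by positivity) (mul_pos hratio (energyLoss_pos hR))

lemma weighted_symNormSq_one_le {R ν κ k η t : ℝ} {Ω Θ : ℝ → ℂ} (hR : 1 / 4 < R) (hν : 0 < ν)
    (hκ : 0 < κ) (hμ : 0 < muDef R ν κ) (hk : k ≠ 0)
    (h : ∀ s, 0 ≤ s → IsModeSolAt R ν κ k η Ω Θ s) (ht : 0 ≤ t) (c : ℝ) :
    (1 + (c * alphaDef (muDef R ν κ) k * (η - k * t)) ^ 2) * symNormSq 1 k η Ω Θ t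
      ≤ decayConst R c * Real.exp (-(1 / 24 * lamDef ν (muDef R ν κ) k * t))
        * ((1 + (c * alphaDef (muDef R ν κ) k * η) ^ 2) * symNormSq 1 k η Ω Θ 0) := by
  have hdecay := symNormSq_one_le hR hν hκ hμ.le hk h ht
  have hrate := lamDef_mul_le_one_add hμ (muDef_le_left R hν hκ) k ht
  have hN := symNormSq_nonneg zero_le_one k η Ω Θ
  set μ := muDef R ν κ
  set x := μ * k ^ 2 * t ^ 3
  set K := max 1 R / min 1 R * energyLoss R with hK
  set W := 1 + (c * alphaDef μ k * η) ^ 2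
  have hK0 : 0 ≤ K := mul_nonneg (div_nonneg (by positivity) (le_min zero_le_one (by linarith)))
    (energyLoss_pos hR).le
  have hweight := one_add_sq_alphaDef_mul_le hμ c k η ht
  have hexp : (1 + x) * Real.exp (-(x / 12))
      ≤ 24 * Real.exp (1 / 24) * Real.exp (-(1 / 24 * lamDef ν μ k * t)) := by
    convert one_add_mul_exp_neg_le hrate (δ := 1 / 12) (by norm_num) (by norm_num) using 3 <;>
      ring_nf
  calc (1 + (c * alphaDef μ k * (η - k * t)) ^ 2) * symNormSq 1 k η Ω Θ t
      ≤ 2 * (1 + c ^ 2) * (1 + x) * W * (K * symNormSq 1 k η Ω Θ 0 * Real.exp (-(x / 12))) :=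
        mul_le_mul hweight hdecay (hN t) (by positivity)
    _ = 2 * (1 + c ^ 2) * W * (K * symNormSq 1 k η Ω Θ 0) * ((1 + x) * Real.exp (-(x / 12))) := by
      ring
    _ ≤ 2 * (1 + c ^ 2) * W * (K * symNormSq 1 k η Ω Θ 0)
          * (24 * Real.exp (1 / 24) * Real.exp (-(1 / 24 * lamDef ν μ k * t))) :=
      mul_le_mul_of_nonneg_left hexp
        (mul_nonneg (by positivity) (mul_nonneg hK0 (hN 0)))
    _ = decayConst R c * Real.exp (-(1 / 24 * lamDef ν μ k * t))
          * (W * symNormSq 1 k η Ω Θ 0) := by rw [decayConst, ← hK]; ring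

theorem stmt9_general (R c₂ : ℝ) (hR : 1 / 4 < R) :
    ∃ C : ℝ, 0 < C ∧ ∀ ν κ : ℝ, 0 < ν → 0 < κ → max ν κ / min ν κ < 4 * √R - 1 →
      ∀ k η : ℝ, k ≠ 0 → ∀ Ω Θ : ℝ → ℂ, (∀ t, 0 ≤ t → IsModeSolAt R ν κ k η Ω Θ t) →
        ∀ t, 0 ≤ t →
          pfun k η t ^ (-(1 : ℝ) / 2)
              * ‖(1 + ((c₂ * alphaDef (muDef R ν κ) k * (η - k * t) : ℝ) : ℂ)
                    * Complex.I) * Ω t‖ ^ 2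
            + pfun k η t ^ ((1 : ℝ) / 2)
              * ‖(1 + ((c₂ * alphaDef (muDef R ν κ) k * (η - k * t) : ℝ) : ℂ)
                    * Complex.I) * Θ t‖ ^ 2
          ≤ C * Real.exp (-(1 / 24 * lamDef ν (muDef R ν κ) k * t))
              * ((k ^ 2 + η ^ 2) ^ (-(1 : ℝ) / 2)
                  * ‖(1 + ((c₂ * alphaDef (muDef R ν κ) k * η : ℝ) : ℂ)
                        * Complex.I) * Ω 0‖ ^ 2
                + (k ^ 2 + η ^ 2) ^ ((1 : ℝ) / 2)
                  * ‖(1 + ((c₂ * alphaDef (muDef R ν κ) k * η : ℝ) : ℂ)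
                        * Complex.I) * Θ 0‖ ^ 2) := by
  refine ⟨decayConst R c₂, decayConst_pos hR c₂, ?_⟩
  intro ν κ hν hκ hratio k η hk Ω Θ hsol t ht
  have hμ := muDef_pos (by linarith) hν hκ hratio
  have hinit : k ^ 2 + η ^ 2 = pfun k η 0 := by simp [pfun]
  rw [hinit, rpow_mul_norm_sq_add_eq_symNormSq, rpow_mul_norm_sq_add_eq_symNormSq]
  exact weighted_symNormSq_one_le hR hν hκ hμ hk hsol ht c₂

/-- pointwise viscous decay with hypocoercive correction:
for `R > 1/4`, `ε ∈ (0,1/2)` there exist positive constants `c₁, c₂, C`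
depending only on `R, ε` such that for all admissible `ν, κ`, all `k ≠ 0`, `η`,
and every solution of `Ω′ = −νpΩ − R·i·k·Θ`, `Θ′ = −κpΘ − (i·k/p)·Ω`, one has
for all `t ≥ 0`
`p^{−1/2}|(1+c₂αi(η−kt))Ω(t)|² + p^{1/2}|(1+c₂αi(η−kt))Θ(t)|²
  ≤ C·e^{−c₁λt}·[(k²+η²)^{−1/2}|(1+c₂αiη)Ω(0)|² + (k²+η²)^{1/2}|(1+c₂αiη)Θ(0)|²]`. -/
theorem stmt9 (R ε : ℝ) (hR : 1 / 4 < R) (hε : ε ∈ Set.Ioo (0 : ℝ) (1 / 2)) :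
    ∃ c₁ c₂ C : ℝ, 0 < c₁ ∧ 0 < c₂ ∧ 0 < C ∧
      ∀ ν κ : ℝ, ν ∈ Set.Ioo (0 : ℝ) 1 → κ ∈ Set.Ioo (0 : ℝ) 1 →
        max ν κ / min ν κ ≤ 4 * Real.sqrt R - 1 - ε →
        ∀ k η : ℝ, k ≠ 0 → ∀ Ω Θ : ℝ → ℂ,
          (∀ t : ℝ, 0 ≤ t →
            HasDerivAt Ω
              (-((ν * pfun k η t : ℝ) : ℂ) * Ω t
                - (R : ℂ) * Complex.I * (k : ℂ) * Θ t) t ∧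
            HasDerivAt Θ
              (-((κ * pfun k η t : ℝ) : ℂ) * Θ t
                - Complex.I * (k : ℂ) / ((pfun k η t : ℝ) : ℂ) * Ω t) t) →
          ∀ t : ℝ, 0 ≤ t →
            pfun k η t ^ (-(1 : ℝ) / 2)
                * ‖(1 + ((c₂ * alphaDef (muDef R ν κ) k * (η - k * t) : ℝ) : ℂ)
                      * Complex.I) * Ω t‖ ^ 2
              + pfun k η t ^ ((1 : ℝ) / 2)
                * ‖(1 + ((c₂ * alphaDef (muDef R ν κ) k * (η - k * t) : ℝ) : ℂ)
                      * Complex.I) * Θ t‖ ^ 2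
            ≤ C * Real.exp (-(c₁ * lamDef ν (muDef R ν κ) k * t))
                * ((k ^ 2 + η ^ 2) ^ (-(1 : ℝ) / 2)
                    * ‖(1 + ((c₂ * alphaDef (muDef R ν κ) k * η : ℝ) : ℂ)
                          * Complex.I) * Ω 0‖ ^ 2
                  + (k ^ 2 + η ^ 2) ^ ((1 : ℝ) / 2)
                    * ‖(1 + ((c₂ * alphaDef (muDef R ν κ) k * η : ℝ) : ℂ)
                          * Complex.I) * Θ 0‖ ^ 2) := by
  obtain ⟨C, hC, hdecay⟩ := stmt9_general R 1 hR
  exact ⟨1 / 24, 1, C, by norm_num, one_pos, hC, fun ν κ hν hκ hratio =>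
    hdecay ν κ hν.1 hκ.1 (hratio.trans_lt (sub_lt_self _ hε.1))⟩
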